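/- Let Z ⊆ ℤ × ℤ be the set of pairs (a,b) with b = −1 or (a,b) ∈ {(-1,0), (-2,0), (-3,0), (-2,-2), (-3,-2), (-4,-2), (-2,1), (-3,-3)}. For a tuple (D₁,…,D₇) ∈ (ℤ×ℤ)⁷ set D₀ = (0,0), and call the tuple an exceptional pattern if Dᵢ − Dⱼ ∈ Z for all 0 ≤ i < j ≤ 7. Then (D₁,…,D₇) is an exceptional pattern if and only if there exists a ∈ ℤ such that (D₁,…,D₇) is one of the following twelve tuples: (1) ((1,0),(2,0),(3,0),(a,1),(a+1,1),(a+2,1),(a+3,1)); (2) ((1,0),(2,0),(a,1),(a+1,1),(a+2,1),(a+3,1),(4,2)); (3) ((1,0),(a,1),(a+1,1),(a+2,1),(a+3,1),(3,2),(4,2)); (4) ((a,1),(a+1,1),(a+2,1),(a+3,1),(2,2),(3,2),(4,2)); (5) ((-1,1),(0,1),(1,1),(2,2),(3,2),(4,2),(3,3)); (6) ((1,0),(2,0),(3,1),(4,1),(5,1),(4,2),(6,1)); (7) ((1,0),(2,1),(3,1),(4,1),(3,2),(5,1),(4,2)); (8) ((1,1),(2,1),(3,1),(2,2),(4,1),(3,2),(4,2));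 (9) ((1,0),(2,0),(1,1),(3,0),(2,1),(3,1),(4,1)); (10) ((1,0),(0,1),(2,0),(1,1),(2,1),(3,1),(4,2)); (11) ((-1,1),(1,0),(0,1),(1,1),(2,1),(3,2),(4,2)); (12) ((2,-1),(1,0),(2,0),(3,0),(4,1),(5,1),(6,1)). -/

import Mathlib

/-- The set of cohomologically zero classes on P_{P³}(O ⊕ O(1)). -/
def czSetE : Set (ℤ × ℤ) :=
  {p | p.2 = -1 ∨ p = (-1, 0) ∨ p = (-2, 0) ∨ p = (-3, 0) ∨ p = (-2, -2) ∨
       p = (-3, -2) ∨ p = (-4, -2) ∨ p = (-2, 1) ∨ p = (-3, -3)}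

/-- Boolean version of membership of `p - q` in `czSetE`. -/
def okb (p q : ℤ × ℤ) : Bool :=
  let a := p.1 - q.1
  let b := p.2 - q.2
  (b == -1) || (b == 0 && (a == -1 || a == -2 || a == -3)) ||
  (b == -2 && (a == -2 || a == -3 || a == -4)) || (b == 1 && a == -2) || (b == -3 && a == -3)

theorem okb_iff (p q : ℤ × ℤ) : okb p q = true ↔ p - q ∈ czSetE := by
  obtain ⟨a, b⟩ := p
  obtain ⟨c, d⟩ := q
  simp only [okb, czSetE, Set.mem_ofPred_eq, Prod.mk_sub_mk, Prod.mk.injEq, Bool.or_eq_true,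
    Bool.and_eq_true, beq_iff_eq]
  omega

/-- The candidate points; index 12 is the origin. -/
def pt (t : ℤ) : ℕ → ℤ × ℤ
  | 0 => (1, 0) | 1 => (2, 0) | 2 => (3, 0)
  | 3 => (2, 2) | 4 => (3, 2) | 5 => (4, 2)
  | 6 => (2, -1) | 7 => (3, 3)
  | 8 => (t, 1) | 9 => (t + 1, 1) | 10 => (t + 2, 1) | 11 => (t + 3, 1)
  | _ => (0, 0)

/-- Depth-first search over sequences of candidate indices (stored in reverse order). -/
def search (rel : ℕ → ℕ → Bool) (P : List ℕ → Bool) : ℕ → List ℕ → Bool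
  | 0, acc => P acc
  | n + 1, acc => [0, 1, 2, 3, 4, 5, 6, 7, 8, 9, 10, 11].all fun q =>
      !(acc.all fun p => rel p q) || search rel P n (q :: acc)

theorem search_step {rel : ℕ → ℕ → Bool} {P : List ℕ → Bool} {n : ℕ} {acc : List ℕ}
    (h : search rel P (n + 1) acc = true) {q : ℕ} (hq : q < 12)
    (hr : ∀ p ∈ acc, rel p q = true) : search rel P n (q :: acc) = true := by
  rw [search, List.all_eq_true] at h
  have h1 := h q (by simp only [List.mem_cons, List.not_mem_nil]; omega)
  have h2 : (acc.all fun p => rel p q) = true := List.all_eq_true.2 hr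
  simpa [h2] using h1

theorem search_sound {rel : ℕ → ℕ → Bool} {P : List ℕ → Bool}
    (h : search rel P 7 [12] = true) (c : Fin 8 → ℕ) (h0 : c 0 = 12)
    (hc : ∀ i, i ≠ 0 → c i < 12) (hr : ∀ i j, i < j → rel (c i) (c j) = true) :
    P [c 7, c 6, c 5, c 4, c 3, c 2, c 1, c 0] = true := by
  rw [← h0] at h
  have s1 := search_step h (hc 1 (by decide)) (by
    simp only [List.forall_mem_cons]; simp [hr])
  have s2 := search_step s1 (hc 2 (by decide)) (by
    simp only [List.forall_mem_cons]; simp [hr])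
  have s3 := search_step s2 (hc 3 (by decide)) (by
    simp only [List.forall_mem_cons]; simp [hr])
  have s4 := search_step s3 (hc 4 (by decide)) (by
    simp only [List.forall_mem_cons]; simp [hr])
  have s5 := search_step s4 (hc 5 (by decide)) (by
    simp only [List.forall_mem_cons]; simp [hr])
  have s6 := search_step s5 (hc 6 (by decide)) (by
    simp only [List.forall_mem_cons]; simp [hr])
  have s7 := search_step s6 (hc 7 (by decide)) (by
    simp only [List.forall_mem_cons]; simp [hr])
  exact s7

/-- The four infinite families, as reversed lists of indices. -/
def famP (l : List ℕ) : Bool :=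
  l == [11, 10, 9, 8, 2, 1, 0, 12] || l == [5, 11, 10, 9, 8, 1, 0, 12] ||
  l == [5, 4, 11, 10, 9, 8, 0, 12] || l == [5, 4, 3, 11, 10, 9, 8, 12]

/-- The eight sporadic tuples, as reversed lists of points. -/
def sporP (l : List (ℤ × ℤ)) : Bool :=
  l == [(3, 3), (4, 2), (3, 2), (2, 2), (1, 1), (0, 1), (-1, 1), (0, 0)] ||
  l == [(6, 1), (4, 2), (5, 1), (4, 1), (3, 1), (2, 0), (1, 0), (0, 0)] ||
  l == [(4, 2), (5, 1), (3, 2), (4, 1), (3, 1), (2, 1), (1, 0), (0, 0)] ||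
  l == [(4, 2), (3, 2), (4, 1), (2, 2), (3, 1), (2, 1), (1, 1), (0, 0)] ||
  l == [(4, 1), (3, 1), (2, 1), (3, 0), (1, 1), (2, 0), (1, 0), (0, 0)] ||
  l == [(4, 2), (3, 1), (2, 1), (1, 1), (2, 0), (0, 1), (1, 0), (0, 0)] ||
  l == [(4, 2), (3, 2), (2, 1), (1, 1), (0, 1), (1, 0), (-1, 1), (0, 0)] ||
  l == [(6, 1), (5, 1), (4, 1), (3, 0), (2, 0), (1, 0), (2, -1), (0, 0)]

/-- Either an infinite family, or sporadic. -/
def bothP (t : ℤ) (l : List ℕ) : Bool := famP l || sporP (l.map (pt t))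

theorem search_generic :
    search (fun i j => okb (pt 20 i) (pt 20 j)) famP 7 [12] = true := by
  decide +kernel

theorem search_special : ∀ k ∈ List.range 11,
    search (fun i j => okb (pt ((k : ℤ) - 4) i) (pt ((k : ℤ) - 4) j)) (bothP ((k : ℤ) - 4)) 7 [12]
      = true := by
  decide +kernel

theorem rel_generic (t : ℤ) (ht : t < -4 ∨ 6 < t) (i j : ℕ) (hi : i ≤ 12) (hj : j < 12)
    (h : okb (pt t i) (pt t j) = true) : okb (pt 20 i) (pt 20 j) = true := by
  interval_cases i <;> interval_cases j <;>
    simp only [okb, pt, Bool.or_eq_true, Bool.and_eq_true, beq_iff_eq] at h ⊢ <;> omega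

theorem exists_index (D : Fin 8 → ℤ × ℤ) (hD0 : D 0 = (0, 0))
    (h : ∀ i j : Fin 8, i < j → okb (D i) (D j) = true) :
    ∃ t : ℤ, ∀ i, i ≠ 0 → ∃ c : ℕ, c < 12 ∧ D i = pt t c := by
  have key : ∀ t : ℤ, (∀ i, (D i).2 = 1 → t ≤ (D i).1 ∧ (D i).1 ≤ t + 3) →
      ∀ i, i ≠ 0 → ∃ c : ℕ, c < 12 ∧ D i = pt t c := by
    intro t ht i hi
    have h1 := h 0 i (Fin.pos_of_ne_zero hi)
    have h2 := ht i
    rw [hD0] at h1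
    generalize D i = p at *
    obtain ⟨a, b⟩ := p
    simp only [okb, Bool.or_eq_true, Bool.and_eq_true, beq_iff_eq] at h1 h2
    have fin : ∀ (c : ℕ), c < 12 → a = (pt t c).1 → b = (pt t c).2 →
        ∃ c : ℕ, c < 12 ∧ (a, b) = pt t c := fun c hc h1 h2 => ⟨c, hc, Prod.ext h1 h2⟩
    rcases h1 with (((h1 | ⟨h1, (h3 | h3) | h3⟩) | ⟨h1, (h3 | h3) | h3⟩) | ⟨h1, h3⟩) | ⟨h1, h3⟩
    · have hb : b = 1 := by omega
      obtain ⟨h4, h5⟩ := h2 hb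
      have h6 : a = t ∨ a = t + 1 ∨ a = t + 2 ∨ a = t + 3 := by omega
      rcases h6 with h6 | h6 | h6 | h6
      · exact fin 8 (by decide) h6 hb
      · exact fin 9 (by decide) h6 hb
      · exact fin 10 (by decide) h6 hb
      · exact fin 11 (by decide) h6 hb
    · exact fin 0 (by decide) (by simp only [pt]; omega) (by simp only [pt]; omega)
    · exact fin 1 (by decide) (by simp only [pt]; omega) (by simp only [pt]; omega)
    · exact fin 2 (by decide) (by simp only [pt]; omega) (by simp only [pt]; omega)
    · exact fin 3 (by decide) (by simp only [pt]; omega) (by simp only [pt]; omega)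
    · exact fin 4 (by decide) (by simp only [pt]; omega) (by simp only [pt]; omega)
    · exact fin 5 (by decide) (by simp only [pt]; omega) (by simp only [pt]; omega)
    · exact fin 6 (by decide) (by simp only [pt]; omega) (by simp only [pt]; omega)
    · exact fin 7 (by decide) (by simp only [pt]; omega) (by simp only [pt]; omega)
  by_cases hne : (Finset.univ.filter fun i => (D i).2 = 1).Nonempty
  · obtain ⟨m, hm, hmin⟩ := Finset.exists_min_image _ (fun i => (D i).1) hne
    simp only [Finset.mem_filter, Finset.mem_univ, true_and] at hm hmin
    refine ⟨(D m).1, key _ fun i hi => ⟨hmin i hi, ?_⟩⟩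
    rcases lt_trichotomy m i with hlt | rfl | hlt
    · have := h _ _ hlt
      simp only [okb, Bool.or_eq_true, Bool.and_eq_true, beq_iff_eq] at this
      omega
    · omega
    · have := h _ _ hlt
      have := hmin i hi
      simp only [okb, Bool.or_eq_true, Bool.and_eq_true, beq_iff_eq] at *
      omega
  · refine ⟨0, key _ fun i hi => absurd ⟨i, ?_⟩ hne⟩
    simpa using hi

theorem classify (D : Fin 8 → ℤ × ℤ) (hD0 : D 0 = (0, 0))
    (h : ∀ i j : Fin 8, i < j → okb (D i) (D j) = true) :
    ∃ t : ℤ, ∃ c : Fin 8 → ℕ, (∀ i, D i = pt t (c i)) ∧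
      bothP t [c 7, c 6, c 5, c 4, c 3, c 2, c 1, c 0] = true := by
  obtain ⟨t, ht⟩ := exists_index D hD0 h
  have : ∀ i, ∃ c : ℕ, D i = pt t c ∧ (i = 0 → c = 12) ∧ (i ≠ 0 → c < 12) := by
    intro i
    by_cases hi : i = 0
    · subst hi
      exact ⟨12, hD0, fun _ => rfl, fun h => absurd rfl h⟩
    · obtain ⟨c, hc, e⟩ := ht i hi
      exact ⟨c, e, fun h => absurd h hi, fun _ => hc⟩
  choose c hc h0 h12 using this
  refine ⟨t, c, hc, ?_⟩
  have hr : ∀ i j : Fin 8, i < j → okb (pt t (c i)) (pt t (c j)) = true := by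
    intro i j hij
    rw [← hc, ← hc]
    exact h i j hij
  by_cases hg : t < -4 ∨ 6 < t
  · have := search_sound search_generic c (h0 0 rfl) h12 (by
      intro i j hij
      refine rel_generic t hg _ _ ?_ (h12 j (Fin.ne_zero_of_lt hij)) (hr i j hij)
      by_cases hi : i = 0
      · exact (h0 i hi).le
      · exact (h12 i hi).le)
    simp [bothP, this]
  · obtain ⟨k, hk⟩ : ∃ k : ℕ, t = (k : ℤ) - 4 := ⟨(t + 4).toNat, by omega⟩
    subst hk
    exact search_sound (search_special k (by simp only [List.mem_range]; omega)) c (h0 0 rfl) h12 hr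

theorem check_tuple (D : Fin 8 → ℤ × ℤ) (hD0 : D 0 = (0, 0)) (p1 p2 p3 p4 p5 p6 p7 : ℤ × ℤ)
    (h : D 1 = p1 ∧ D 2 = p2 ∧ D 3 = p3 ∧ D 4 = p4 ∧ D 5 = p5 ∧ D 6 = p6 ∧ D 7 = p7)
    (hp : [(0, 0), p1, p2, p3, p4, p5, p6, p7].Pairwise fun p q => okb p q = true) :
    ∀ i j : Fin 8, i < j → okb (D i) (D j) = true := by
  obtain ⟨rfl, rfl, rfl, rfl, rfl, rfl, rfl⟩ := h
  rw [← hD0] at hp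
  have e : [D 0, D 1, D 2, D 3, D 4, D 5, D 6, D 7] = List.ofFn D := by simp [List.ofFn_succ]
  rw [e, List.pairwise_ofFn] at hp
  exact fun i j hij => hp hij

/-- Classification of exceptional patterns of length 8 on P_{P³}(O ⊕ O(1)):
with D₀ = (0,0), we have Dᵢ − Dⱼ ∈ Z for all 0 ≤ i < j ≤ 7 iff the tuple
(D₁,…,D₇) is one of the twelve listed families. -/
theorem exceptional_pattern_classification_PP3_O1
    (D : Fin 8 → ℤ × ℤ) (hD0 : D 0 = (0, 0)) :
    (∀ i j : Fin 8, i < j → D i - D j ∈ czSetE) ↔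
      ∃ a : ℤ,
        (D 1, D 2, D 3, D 4, D 5, D 6, D 7) =
          ((1, 0), (2, 0), (3, 0), (a, 1), (a + 1, 1), (a + 2, 1), (a + 3, 1)) ∨
        (D 1, D 2, D 3, D 4, D 5, D 6, D 7) =
          ((1, 0), (2, 0), (a, 1), (a + 1, 1), (a + 2, 1), (a + 3, 1), (4, 2)) ∨
        (D 1, D 2, D 3, D 4, D 5, D 6, D 7) =
          ((1, 0), (a, 1), (a + 1, 1), (a + 2, 1), (a + 3, 1), (3, 2), (4, 2)) ∨
        (D 1, D 2, D 3, D 4, D 5, D 6, D 7) =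
          ((a, 1), (a + 1, 1), (a + 2, 1), (a + 3, 1), (2, 2), (3, 2), (4, 2)) ∨
        (D 1, D 2, D 3, D 4, D 5, D 6, D 7) =
          ((-1, 1), (0, 1), (1, 1), (2, 2), (3, 2), (4, 2), (3, 3)) ∨
        (D 1, D 2, D 3, D 4, D 5, D 6, D 7) =
          ((1, 0), (2, 0), (3, 1), (4, 1), (5, 1), (4, 2), (6, 1)) ∨
        (D 1, D 2, D 3, D 4, D 5, D 6, D 7) =
          ((1, 0), (2, 1), (3, 1), (4, 1), (3, 2), (5, 1), (4, 2)) ∨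
        (D 1, D 2, D 3, D 4, D 5, D 6, D 7) =
          ((1, 1), (2, 1), (3, 1), (2, 2), (4, 1), (3, 2), (4, 2)) ∨
        (D 1, D 2, D 3, D 4, D 5, D 6, D 7) =
          ((1, 0), (2, 0), (1, 1), (3, 0), (2, 1), (3, 1), (4, 1)) ∨
        (D 1, D 2, D 3, D 4, D 5, D 6, D 7) =
          ((1, 0), (0, 1), (2, 0), (1, 1), (2, 1), (3, 1), (4, 2)) ∨
        (D 1, D 2, D 3, D 4, D 5, D 6, D 7) =
          ((-1, 1), (1, 0), (0, 1), (1, 1), (2, 1), (3, 2), (4, 2)) ∨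
        (D 1, D 2, D 3, D 4, D 5, D 6, D 7) =
          ((2, -1), (1, 0), (2, 0), (3, 0), (4, 1), (5, 1), (6, 1)) := by
  constructor
  · intro h
    obtain ⟨t, c, hc, hP⟩ := classify D hD0 fun i j hij => (okb_iff _ _).2 (h i j hij)
    refine ⟨t, ?_⟩
    simp only [bothP, Bool.or_eq_true] at hP
    rcases hP with hP | hP
    · simp only [famP, Bool.or_eq_true, beq_iff_eq, List.cons.injEq] at hP
      rcases hP with ((hP | hP) | hP) | hP
      · left
        simp [hc, hP, pt]
      · right; left
        simp [hc, hP, pt]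
      · right; right; left
        simp [hc, hP, pt]
      · right; right; right; left
        simp [hc, hP, pt]
    · simp only [sporP, List.map_cons, List.map_nil, ← hc, Bool.or_eq_true, beq_iff_eq,
        List.cons.injEq] at hP
      rcases hP with ((((((hP | hP) | hP) | hP) | hP) | hP) | hP) | hP <;>
        obtain ⟨h7, h6, h5, h4, h3, h2, h1, -⟩ := hP <;> rw [h1, h2, h3, h4, h5, h6, h7]
      · iterate 4 right
        left; rfl
      · iterate 5 right
        left; rfl
      · iterate 6 right
        left; rfl
      · iterate 7 right
        left; rfl
      · iterate 8 right
        left; rfl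
      · iterate 9 right
        left; rfl
      · iterate 10 right
        left; rfl
      · iterate 11 right
        rfl
  · rintro ⟨a, h⟩ i j hij
    rw [← okb_iff]
    rcases h with h | h | h | h | h | h | h | h | h | h | h | h <;>
    · simp only [Prod.mk.injEq (D _)] at h
      exact check_tuple D hD0 _ _ _ _ _ _ _ h (by simp [okb]) i j hij
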